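/- Suppose f satisfies Assumptions 1 (each f_i is L-smooth), 2 (component gradient variance with constants A,B ≥ 0), 3 (primal function well-defined), and 4 (y-side μ₂-PL); let κ₂ := L/μ₂, λ > 0, and let the step sizes satisfy α ≤ λ/(((λ+1)(κ₂+1)+1)qL), β ≤ 1/(qL), α² + β² ≤ 1/(3q(q−1)L²), and C₀ := qβ − 2L²q(q² + (q(q−1)/(n−1))A)((2λ+1)α + β)β² ≥ 0. Then for each epoch k of mini-batch simSGDA-RR with uniformly random permutation: E_k[V_λ(z₀^{k+1})] − V_λ(z₀^k) ≤ −C₁‖∇Φ(x₀^k)‖² − C₂(Φ(x₀^k) − f(z₀^k)) + C₃, where C₁ = ((λ−1)/2)qα − 2L²q(q² + (q(q−1)/(n−1))A)((2λ+1)α + β)α², C₂ = μ₂qβ − 2(λ+2)Lκ₂qα − 2L²μ₂q(q² + (q(q−1)/(n−1))A)((2λ+1)α + β)(2κ₂²α² + β²), and C₃ = (L²q²(q−1)/(n−1))((2λ+1)α + β)(α² + β²)B. -/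

import Mathlib

/-- Mini-batch average of (partial) gradients over the `t`-th batch (0-indexed) induced by a
permutation `σ` with batch size `b`. -/
noncomputable def batchAvg {n : ℕ} {E F V : Type*} [AddCommGroup V] [Module ℝ V] (b : ℕ)
    (g : Fin n → E → F → V) (σ : Equiv.Perm (Fin n)) (t : ℕ) (x : E) (y : F) : V :=
  (b : ℝ)⁻¹ •
    ∑ j ∈ Finset.univ.filter (fun j : Fin n => b * t ≤ (j : ℕ) ∧ (j : ℕ) < b * (t + 1)),
      g (σ j) x y

/-- `t` steps of one epoch of mini-batch simultaneous SGDA with permutation `σ`. -/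
noncomputable def simEpoch {n : ℕ} {E F : Type*} [AddCommGroup E] [Module ℝ E]
    [AddCommGroup F] [Module ℝ F] (α β : ℝ) (b : ℕ)
    (g1 : Fin n → E → F → E) (g2 : Fin n → E → F → F)
    (σ : Equiv.Perm (Fin n)) : ℕ → E × F → E × F
  | 0, z => z
  | t + 1, z =>
    let w := simEpoch α β b g1 g2 σ t z
    (w.1 - α • batchAvg b g1 σ t w.1 w.2, w.2 + β • batchAvg b g2 σ t w.1 w.2)

section Smooth

variable {E F : Type*} [NormedAddCommGroup E] [InnerProductSpace ℝ E]
  [NormedAddCommGroup F] [InnerProductSpace ℝ F]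

/-- Cauchy–Schwarz for a pair of inner products. -/
lemma abs_inner_add_inner_le (a c : E) (b d : F) {K D : ℝ} (hK : 0 ≤ K)
    (h : ‖a‖ ^ 2 + ‖b‖ ^ 2 ≤ K ^ 2 * D) (hD : ‖c‖ ^ 2 + ‖d‖ ^ 2 = D) :
    |inner ℝ a c + inner ℝ b d| ≤ K * D := by
  have hD0 : 0 ≤ D := by rw [← hD]; positivity
  refine abs_le_of_sq_le_sq ?_ (by positivity)
  have h1 : (inner ℝ a c + inner ℝ b d) ^ 2 ≤ (‖a‖ * ‖c‖ + ‖b‖ * ‖d‖) ^ 2 := by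
    refine sq_le_sq' ?_ ?_
    · linarith [neg_le_of_abs_le (abs_real_inner_le_norm a c),
        neg_le_of_abs_le (abs_real_inner_le_norm b d)]
    · exact add_le_add (real_inner_le_norm a c) (real_inner_le_norm b d)
  have h2 : (‖a‖ * ‖c‖ + ‖b‖ * ‖d‖) ^ 2 ≤ (‖a‖ ^ 2 + ‖b‖ ^ 2) * (‖c‖ ^ 2 + ‖d‖ ^ 2) := by
    nlinarith [sq_nonneg (‖a‖ * ‖d‖ - ‖b‖ * ‖c‖)]
  rw [hD] at h2
  nlinarith [mul_le_mul_of_nonneg_right h hD0]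

/-- Quadratic Taylor bound for a function with jointly `L`-Lipschitz partial gradients. -/
lemma abs_sub_sub_inner_le_of_partial_gradients [CompleteSpace E] [CompleteSpace F]
    {f : E → F → ℝ} {G1 : E → F → E} {G2 : E → F → F}
    {L : ℝ} (hL : 0 < L)
    (hf1 : ∀ x y, HasGradientAt (fun x' => f x' y) (G1 x y) x)
    (hf2 : ∀ x y, HasGradientAt (fun y' => f x y') (G2 x y) y)
    (hG : ∀ x y x' y', ‖G1 x y - G1 x' y'‖ ^ 2 + ‖G2 x y - G2 x' y'‖ ^ 2
        ≤ L ^ 2 * (‖x - x'‖ ^ 2 + ‖y - y'‖ ^ 2))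
    (x x' : E) (y y' : F) :
    |f x' y' - f x y - (inner ℝ (G1 x y) (x' - x) + inner ℝ (G2 x y) (y' - y))|
      ≤ L / 2 * (‖x' - x‖ ^ 2 + ‖y' - y‖ ^ 2) := by
  have key : ∀ u v : E × F, ‖G1 u.1 u.2 - G1 v.1 v.2‖ ≤ 2 * L * ‖u - v‖ ∧
      ‖G2 u.1 u.2 - G2 v.1 v.2‖ ≤ 2 * L * ‖u - v‖ := by
    intro u v
    have h := hG u.1 u.2 v.1 v.2
    have h1 : ‖u.1 - v.1‖ ≤ ‖u - v‖ := norm_fst_le (u - v)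
    have h2 : ‖u.2 - v.2‖ ≤ ‖u - v‖ := norm_snd_le (u - v)
    have h1' := pow_le_pow_left₀ (norm_nonneg _) h1 2
    have h2' := pow_le_pow_left₀ (norm_nonneg _) h2 2
    have h3 := mul_le_mul_of_nonneg_left (add_le_add h1' h2') (sq_nonneg L)
    have h4 : 0 ≤ L ^ 2 * ‖u - v‖ ^ 2 := by positivity
    constructor <;> refine (sq_le_sq₀ (norm_nonneg _) (by positivity)).1 ?_ <;>
    nlinarith [sq_nonneg ‖G1 u.1 u.2 - G1 v.1 v.2‖, sq_nonneg ‖G2 u.1 u.2 - G2 v.1 v.2‖]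
  have c1 : Continuous fun u : E × F => G1 u.1 u.2 :=
    (LipschitzWith.of_dist_le' (K := 2 * L) fun u v => by
      simpa [dist_eq_norm] using (key u v).1).continuous
  have c2 : Continuous fun u : E × F => G2 u.1 u.2 :=
    (LipschitzWith.of_dist_le' (K := 2 * L) fun u v => by
      simpa [dist_eq_norm] using (key u v).2).continuous
  have hjoint : ∀ u : E × F, HasFDerivAt (fun v : E × F => f v.1 v.2)
      ((InnerProductSpace.toDual ℝ E (G1 u.1 u.2)).coprod
        (InnerProductSpace.toDual ℝ F (G2 u.1 u.2))) u := fun u =>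
    (hasStrictFDerivAt_uncurry_coprod (u := u) (f := f)
      (f₁ := fun x y => InnerProductSpace.toDual ℝ E (G1 x y))
      (f₂ := fun x y => InnerProductSpace.toDual ℝ F (G2 x y))
      (.of_forall fun v => (hf1 v.1 v.2).hasFDerivAt)
      (.of_forall fun v => (hf2 v.1 v.2).hasFDerivAt)
      ((InnerProductSpace.toDual ℝ E).continuous.comp c1).continuousAt
      ((InnerProductSpace.toDual ℝ F).continuous.comp c2).continuousAt).hasFDerivAt
  set d := x' - x with hd
  set e := y' - y with he
  have hline : ∀ t : ℝ, HasDerivAt (fun s : ℝ => ((x + s • d, y + s • e) : E × F)) (d, e) t := by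
    intro t
    have a1 : HasDerivAt (fun s : ℝ => x + s • d) d t := by
      simpa using ((hasDerivAt_id t).smul_const d).const_add x
    have a2 : HasDerivAt (fun s : ℝ => y + s • e) e t := by
      simpa using ((hasDerivAt_id t).smul_const e).const_add y
    exact a1.prodMk a2
  have hφ : ∀ t : ℝ, HasDerivAt (fun s : ℝ => f (x + s • d) (y + s • e) - f x y
      - s * (inner ℝ (G1 x y) d + inner ℝ (G2 x y) e))
      (inner ℝ (G1 (x + t • d) (y + t • e) - G1 x y) d
        + inner ℝ (G2 (x + t • d) (y + t • e) - G2 x y) e) t := by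
    intro t
    have h := ((hjoint (x + t • d, y + t • e)).comp_hasDerivAt t (hline t)).sub_const (f x y)
    have h' := h.sub ((hasDerivAt_id t).mul_const (inner ℝ (G1 x y) d + inner ℝ (G2 x y) e))
    refine h'.congr_deriv ?_
    simp [inner_sub_left]
    ring
  set D := ‖d‖ ^ 2 + ‖e‖ ^ 2 with hD
  have hBd : ∀ t : ℝ, HasDerivAt (fun s : ℝ => L * D / 2 * s ^ 2) (L * D * t) t := by
    intro t
    have := ((hasDerivAt_id t).pow 2).const_mul (L * D / 2)
    refine this.congr_deriv ?_
    simp; ring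
  have := image_norm_le_of_norm_deriv_right_le_deriv_boundary (a := 0) (b := 1)
    (fun t _ => (hφ t).continuousAt.continuousWithinAt)
    (fun t _ => (hφ t).hasDerivWithinAt) (by simp) hBd ?_ (Set.right_mem_Icc.2 zero_le_one)
  · simp only [one_smul, hd, he, add_sub_cancel, Real.norm_eq_abs] at this
    simp only [hd, he] at hD ⊢
    convert this using 1
    · congr 1; ring
    · rw [hD]; ring
  · intro t ht
    rw [Real.norm_eq_abs]
    have h0 : t ≥ 0 := ht.1
    have hs := hG (x + t • d) (y + t • e) x y
    simp only [add_sub_cancel_left, norm_smul, mul_pow, Real.norm_eq_abs, sq_abs] at hs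
    have := abs_inner_add_inner_le _ d _ e (K := L * t) (by positivity)
      (hs.trans (le_of_eq (by rw [hD]; ring))) hD.symm
    linarith

end Smooth

section PL

variable {F : Type*} [NormedAddCommGroup F] [InnerProductSpace ℝ F] [CompleteSpace F]

/-- Quadratic growth under a Polyak–Łojasiewicz inequality: a zero of a nonnegative function `h`
exists within distance `√(h y₀) / c` of `y₀`, for every `c` below the sharp constant. -/
lemma exists_zero_norm_sub_le_of_PL [ProperSpace F] {h : F → ℝ} {g : F → F} {μ c : ℝ}
    (hh : ∀ y, HasGradientAt h (g y) y) (h0 : ∀ y, 0 ≤ h y)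
    (hPL : ∀ y, 2 * μ * h y ≤ ‖g y‖ ^ 2) (hc : 0 < c) (hcμ : 2 * c ^ 2 < μ) (y0 : F) :
    ∃ y, h y = 0 ∧ c ^ 2 * ‖y0 - y‖ ^ 2 ≤ h y0 := by
  have hcont : Continuous h := continuous_iff_continuousAt.2 fun y => (hh y).continuousAt
  obtain ⟨y, hy⟩ : ∃ y, ∀ y',
      Real.sqrt (h y) + c * ‖y - y0‖ ≤ Real.sqrt (h y') + c * ‖y' - y0‖ := by
    have hc' : Continuous fun y => Real.sqrt (h y) + c * ‖y - y0‖ := by fun_prop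
    refine hc'.exists_forall_le ?_
    refine Filter.tendsto_atTop_mono (f := fun y => c * ‖y - y0‖)
      (fun y => by linarith [Real.sqrt_nonneg (h y)]) ?_
    refine Filter.Tendsto.const_mul_atTop hc ?_
    simpa [dist_eq_norm] using tendsto_dist_right_cocompact_atTop y0
  refine ⟨y, ?_, ?_⟩
  · by_contra hne
    have hpos : 0 < h y := lt_of_le_of_ne (h0 y) (Ne.symm hne)
    set s := Real.sqrt (h y) with hs
    have hspos : 0 < s := Real.sqrt_pos.2 hpos
    have hs2 : s ^ 2 = h y := Real.sq_sqrt hpos.le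
    have hgpos : 0 < ‖g y‖ := by
      have := hPL y
      have h2 : 0 < 2 * μ * h y := by
        have : 0 < μ := lt_trans (by positivity) hcμ
        positivity
      exact norm_pos_iff.2 fun hz => by simp [hz] at this; linarith
    have hline : HasDerivAt (fun t : ℝ => Real.sqrt (h (y - t • g y)) + c * (t * ‖g y‖))
        (-(‖g y‖ ^ 2) / (2 * s) + c * ‖g y‖) 0 := by
      have a1 : HasDerivAt (fun t : ℝ => y - t • g y) (-g y) 0 := by
        simpa using ((hasDerivAt_id (0:ℝ)).smul_const (g y)).const_sub y
      have a2 : HasDerivAt (fun t : ℝ => h (y - t • g y)) (-(‖g y‖ ^ 2)) 0 := by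
        have hh' := (hh y).hasFDerivAt
        have e0 : y = y - (0:ℝ) • g y := by simp
        rw [e0] at hh'
        have := hh'.comp_hasDerivAt (0:ℝ) a1
        simpa using! this
      have a3 := a2.sqrt (by simpa using hpos.ne')
      have a4 := ((hasDerivAt_id (0:ℝ)).mul_const ‖g y‖).const_mul c
      have := a3.add a4
      simpa [hs] using! this
    have hneg : -(‖g y‖ ^ 2) / (2 * s) + c * ‖g y‖ < 0 := by
      have h1 : (2 * c * s) ^ 2 < ‖g y‖ ^ 2 := by
        refine lt_of_lt_of_le ?_ (hPL y)
        rw [mul_pow, hs2]; nlinarith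
      have h2 : 2 * c * s < ‖g y‖ := lt_of_pow_lt_pow_left₀ 2 (norm_nonneg _) h1
      rw [neg_div, neg_add_lt_iff_lt_add, add_zero, lt_div_iff₀ (by positivity)]
      nlinarith
    have hmin : ∀ t : ℝ, 0 ≤ t → s ≤ Real.sqrt (h (y - t • g y)) + c * (t * ‖g y‖) := by
      intro t ht
      have := hy (y - t • g y)
      have tri : ‖y - t • g y - y0‖ ≤ ‖y - y0‖ + t * ‖g y‖ := by
        have := norm_sub_le (y - y0) (t • g y)
        rw [norm_smul, Real.norm_of_nonneg ht] at this
        rwa [sub_right_comm]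
      nlinarith [mul_le_mul_of_nonneg_left tri hc.le]
    have hslope := hline.tendsto_slope_zero_right
    have : 0 ≤ -(‖g y‖ ^ 2) / (2 * s) + c * ‖g y‖ := by
      refine ge_of_tendsto hslope ?_
      filter_upwards [self_mem_nhdsWithin] with t ht
      have := hmin t (le_of_lt ht)
      simp only [zero_add, zero_smul, sub_zero, zero_mul, mul_zero, add_zero, smul_eq_mul, ← hs]
      exact mul_nonneg (inv_nonneg.2 (le_of_lt ht)) (by linarith)
    linarith
  · have h1 := hy y0
    simp only [sub_self, norm_zero, mul_zero, add_zero] at h1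
    have h2 : c * ‖y0 - y‖ ≤ Real.sqrt (h y0) := by
      rw [norm_sub_rev]; linarith [Real.sqrt_nonneg (h y)]
    calc c ^ 2 * ‖y0 - y‖ ^ 2 = (c * ‖y0 - y‖) ^ 2 := by ring
      _ ≤ Real.sqrt (h y0) ^ 2 := pow_le_pow_left₀ (by positivity) h2 2
      _ = h y0 := Real.sq_sqrt (h0 _)

end PL

section Primal

variable {E F : Type*} [NormedAddCommGroup E] [InnerProductSpace ℝ E] [CompleteSpace E]
  [NormedAddCommGroup F] [InnerProductSpace ℝ F] [CompleteSpace F]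
  {f : E → F → ℝ} {G1 : E → F → E} {G2 : E → F → F} {Φ : E → ℝ} {L μ : ℝ}

/-- Two-sided quadratic expansion of the primal function around a point, with the partial gradient
at any maximizer as linear part. -/
lemma primal_quadratic_bounds (hL : 0 < L) (hμ : 0 < μ)
    (hf1 : ∀ x y, HasGradientAt (fun x' => f x' y) (G1 x y) x)
    (hf2 : ∀ x y, HasGradientAt (fun y' => f x y') (G2 x y) y)
    (hG : ∀ x y x' y', ‖G1 x y - G1 x' y'‖ ^ 2 + ‖G2 x y - G2 x' y'‖ ^ 2
        ≤ L ^ 2 * (‖x - x'‖ ^ 2 + ‖y - y'‖ ^ 2))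
    (hΦ : ∀ x, IsGreatest (Set.range (f x)) (Φ x))
    (hPL : ∀ x y, 2 * μ * (Φ x - f x y) ≤ ‖G2 x y‖ ^ 2)
    {x : E} {y : F} (hy : f x y = Φ x) (x' : E) :
    Φ x' ≤ Φ x + inner ℝ (G1 x y) (x' - x) + L * (L / μ + 1) / 2 * ‖x' - x‖ ^ 2 ∧
      Φ x + inner ℝ (G1 x y) (x' - x) - L / 2 * ‖x' - x‖ ^ 2 ≤ Φ x' := by
  have hle : ∀ x y, f x y ≤ Φ x := fun x y => (hΦ x).2 ⟨y, rfl⟩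
  have htaylor := abs_sub_sub_inner_le_of_partial_gradients hL hf1 hf2 hG x x' y y
  simp only [sub_self, inner_zero_right, add_zero, norm_zero, ne_eq, OfNat.ofNat_ne_zero,
    not_false_eq_true, zero_pow] at htaylor
  obtain ⟨hlo, hhi⟩ := abs_le.1 htaylor
  refine ⟨?_, by linarith [hle x' y]⟩
  have hzero : G2 x y = 0 := by
    have hmax : IsLocalMax (fun y' => f x y') y :=
      Filter.Eventually.of_forall fun y' => by simpa only [hy] using hle x y'
    simpa using hmax.hasFDerivAt_eq_zero (hf2 x y).hasFDerivAt
  have hG2 : ‖G2 x' y‖ ^ 2 ≤ L ^ 2 * ‖x' - x‖ ^ 2 := by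
    have := hG x' y x y
    simp only [sub_self, norm_zero, hzero, sub_zero] at this
    nlinarith [sq_nonneg ‖G1 x' y - G1 x y‖]
  have hgap : Φ x' - f x' y ≤ L ^ 2 * ‖x' - x‖ ^ 2 / (2 * μ) := by
    rw [le_div_iff₀ (by positivity)]
    linarith [hPL x' y]
  have e : L * (L / μ + 1) / 2 * ‖x' - x‖ ^ 2
      = L ^ 2 * ‖x' - x‖ ^ 2 / (2 * μ) + L / 2 * ‖x' - x‖ ^ 2 := by
    field_simp
  linarith

/-- The primal function is differentiable, with gradient the partial gradient at any maximizer. -/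
lemma primal_hasGradientAt (hL : 0 < L) (hμ : 0 < μ)
    (hf1 : ∀ x y, HasGradientAt (fun x' => f x' y) (G1 x y) x)
    (hf2 : ∀ x y, HasGradientAt (fun y' => f x y') (G2 x y) y)
    (hG : ∀ x y x' y', ‖G1 x y - G1 x' y'‖ ^ 2 + ‖G2 x y - G2 x' y'‖ ^ 2
        ≤ L ^ 2 * (‖x - x'‖ ^ 2 + ‖y - y'‖ ^ 2))
    (hΦ : ∀ x, IsGreatest (Set.range (f x)) (Φ x))
    (hPL : ∀ x y, 2 * μ * (Φ x - f x y) ≤ ‖G2 x y‖ ^ 2)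
    {x : E} {y : F} (hy : f x y = Φ x) : HasGradientAt Φ (G1 x y) x := by
  rw [hasGradientAt_iff_isLittleO]
  have hO : (fun x' => Φ x' - Φ x - inner ℝ (G1 x y) (x' - x)) =O[nhds x]
      fun x' => ‖x' - x‖ ^ 2 := by
    refine Asymptotics.IsBigO.of_bound (L * (L / μ + 1)) (Filter.Eventually.of_forall fun x' => ?_)
    obtain ⟨h1, h2⟩ := primal_quadratic_bounds hL hμ hf1 hf2 hG hΦ hPL hy x'
    have hp : 0 ≤ L * (L / μ) * ‖x' - x‖ ^ 2 := by positivity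
    have hp' : 0 ≤ L * ‖x' - x‖ ^ 2 := by positivity
    rw [Real.norm_eq_abs, Real.norm_of_nonneg (sq_nonneg _)]
    refine abs_le.2 ⟨by nlinarith, by nlinarith⟩
  refine hO.trans_isLittleO ?_
  exact Asymptotics.isLittleO_pow_sub_sub x one_lt_two

/-- The partial gradient approximates the primal gradient up to the optimality gap. -/
lemma norm_partial_gradient_sub_primal_gradient_sq_le [ProperSpace F] (hL : 0 < L) (hμ : 0 < μ)
    (hf1 : ∀ x y, HasGradientAt (fun x' => f x' y) (G1 x y) x)
    (hf2 : ∀ x y, HasGradientAt (fun y' => f x y') (G2 x y) y)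
    (hG : ∀ x y x' y', ‖G1 x y - G1 x' y'‖ ^ 2 + ‖G2 x y - G2 x' y'‖ ^ 2
        ≤ L ^ 2 * (‖x - x'‖ ^ 2 + ‖y - y'‖ ^ 2))
    (hΦ : ∀ x, IsGreatest (Set.range (f x)) (Φ x))
    (hPL : ∀ x y, 2 * μ * (Φ x - f x y) ≤ ‖G2 x y‖ ^ 2) (x : E) (y : F) :
    ‖gradient Φ x - G1 x y‖ ^ 2 ≤ 2 * L * (L / μ) * (Φ x - f x y) := by
  have hbound : ∀ m : ℝ, 0 < m → m < μ →
      m * ‖gradient Φ x - G1 x y‖ ^ 2 ≤ 2 * L ^ 2 * (Φ x - f x y) := by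
    intro m hm hmμ
    have hgrad : ∀ y', HasGradientAt (fun y'' => Φ x - f x y'') (-G2 x y') y' := fun y' => by
      have := (hf2 x y').hasFDerivAt.const_sub (Φ x)
      rw [hasGradientAt_iff_hasFDerivAt]
      simpa using this
    have hsq : Real.sqrt (m / 2) ^ 2 = m / 2 := Real.sq_sqrt (by positivity)
    obtain ⟨ys, hys, hdist⟩ := exists_zero_norm_sub_le_of_PL (c := Real.sqrt (m / 2)) (μ := μ) hgrad
      (fun y' => sub_nonneg.2 ((hΦ x).2 ⟨y', rfl⟩)) (fun y' => by rw [norm_neg]; exact hPL x y')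
      (Real.sqrt_pos.2 (by positivity)) (by rw [hsq]; linarith) y
    rw [hsq] at hdist
    rw [(primal_hasGradientAt hL hμ hf1 hf2 hG hΦ hPL (sub_eq_zero.1 hys).symm).gradient]
    have hlip := hG x ys x y
    rw [sub_self, norm_zero, norm_sub_rev ys y] at hlip
    have hlip' : ‖G1 x ys - G1 x y‖ ^ 2 ≤ L ^ 2 * ‖y - ys‖ ^ 2 := by
      nlinarith [sq_nonneg ‖G2 x ys - G2 x y‖]
    nlinarith [mul_le_mul_of_nonneg_left hlip' hm.le, mul_le_mul_of_nonneg_left hdist (sq_nonneg L)]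
  have hlim : μ * ‖gradient Φ x - G1 x y‖ ^ 2 ≤ 2 * L ^ 2 * (Φ x - f x y) := by
    have htend : Filter.Tendsto (fun m : ℝ => m * ‖gradient Φ x - G1 x y‖ ^ 2)
        (nhdsWithin μ (Set.Iio μ)) (nhds (μ * ‖gradient Φ x - G1 x y‖ ^ 2)) :=
      ((continuous_id.mul continuous_const).tendsto μ).mono_left nhdsWithin_le_nhds
    refine le_of_tendsto htend ?_
    filter_upwards [Ioo_mem_nhdsLT hμ] with m hm using hbound m hm.1 hm.2
  have e : 2 * L * (L / μ) * (Φ x - f x y) = 2 * L ^ 2 * (Φ x - f x y) / μ := by field_simp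
  rw [e, le_div_iff₀ hμ]
  linarith

/-- Change of the potential along a joint step `(x - a • p, y + c • r)`, in terms of the error of
`(p, r)` as an estimator of the partial gradients. -/
lemma potential_step_le [ProperSpace F] (hL : 0 < L) (hμ : 0 < μ)
    (hf1 : ∀ x y, HasGradientAt (fun x' => f x' y) (G1 x y) x)
    (hf2 : ∀ x y, HasGradientAt (fun y' => f x y') (G2 x y) y)
    (hG : ∀ x y x' y', ‖G1 x y - G1 x' y'‖ ^ 2 + ‖G2 x y - G2 x' y'‖ ^ 2
        ≤ L ^ 2 * (‖x - x'‖ ^ 2 + ‖y - y'‖ ^ 2))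
    (hΦ : ∀ x, IsGreatest (Set.range (f x)) (Φ x))
    (hPL : ∀ x y, 2 * μ * (Φ x - f x y) ≤ ‖G2 x y‖ ^ 2)
    {lam a c : ℝ} (hlam : 0 < lam) (ha : 0 ≤ a) (hc : 0 ≤ c)
    (ha' : ((lam + 1) * (L / μ + 1) + 1) * L * a ≤ lam) (hc' : L * c ≤ 1)
    (x p : E) (y r : F) :
    (lam + 1) * (Φ (x - a • p) - Φ x) - (f (x - a • p) (y + c • r) - f x y) ≤
      -((lam - 1) / 2) * a * ‖gradient Φ x‖ ^ 2 +
        (lam + 2) * a * (2 * L * (L / μ) * (Φ x - f x y)) +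
        (2 * lam + 1) / 2 * a * ‖p - G1 x y‖ ^ 2 + c / 2 * ‖r - G2 x y‖ ^ 2
        - c / 2 * ‖G2 x y‖ ^ 2 := by
  obtain ⟨ys, hys⟩ := (hΦ x).1
  have hgap := norm_partial_gradient_sub_primal_gradient_sq_le hL hμ hf1 hf2 hG hΦ hPL x y
  have hΦstep := (primal_quadratic_bounds hL hμ hf1 hf2 hG hΦ hPL hys (x - a • p)).1
  rw [← (primal_hasGradientAt hL hμ hf1 hf2 hG hΦ hPL hys).gradient] at hΦstep
  have hfstep := (abs_le.1
    (abs_sub_sub_inner_le_of_partial_gradients hL hf1 hf2 hG x (x - a • p) y (y + c • r))).1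
  generalize gradient Φ x = u at *
  generalize G1 x y = v at *
  generalize G2 x y = w at *
  simp only [sub_sub_cancel_left, add_sub_cancel_left, inner_neg_right, inner_smul_right, norm_neg,
    norm_smul, mul_pow, Real.norm_eq_abs, sq_abs] at hΦstep hfstep
  have hp2 : a * ((((lam + 1) * (L / μ + 1) + 1) * L * a) * ‖p‖ ^ 2) ≤ a * (lam * ‖p‖ ^ 2) := by
    gcongr
  have hr2 : c * ((L * c) * ‖r‖ ^ 2) ≤ c * (1 * ‖r‖ ^ 2) := by gcongr
  have hΦstep' := mul_le_mul_of_nonneg_left hΦstep (by linarith : 0 ≤ lam + 1)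
  have hquad : -(lam + 1) * inner ℝ u p + inner ℝ v p + lam / 2 * ‖p‖ ^ 2 ≤
      -((lam - 1) / 2) * ‖u‖ ^ 2 + (lam + 2) * ‖u - v‖ ^ 2 + (2 * lam + 1) / 2 * ‖p - v‖ ^ 2 := by
    have e1 : 0 ≤ ‖(p - v) + (u - v)‖ ^ 2 := sq_nonneg _
    have e2 : 0 ≤ ‖u + (u - v)‖ ^ 2 := sq_nonneg _
    have e3 := mul_nonneg hlam.le e1
    simp only [← real_inner_self_eq_norm_sq, inner_add_left, inner_add_right, inner_sub_left,
      inner_sub_right] at e1 e2 e3 ⊢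
    rw [real_inner_comm v u, real_inner_comm p u, real_inner_comm p v] at *
    nlinarith
  have hquad' := mul_le_mul_of_nonneg_left hquad ha
  have hgap' := mul_le_mul_of_nonneg_left hgap (by positivity : 0 ≤ (lam + 2) * a)
  have hr : ‖r - w‖ ^ 2 = ‖r‖ ^ 2 - 2 * inner ℝ w r + ‖w‖ ^ 2 := by
    rw [norm_sub_sq_real, real_inner_comm]
  rw [hr]
  nlinarith

end Primal

section Averages

variable {ι V W : Type*} [NormedAddCommGroup V] [NormedAddCommGroup W]

lemma norm_sum_sq_le_card_mul (s : Finset ι) (a : ι → V) :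
    ‖∑ i ∈ s, a i‖ ^ 2 ≤ (s.card : ℝ) * ∑ i ∈ s, ‖a i‖ ^ 2 :=
  (pow_le_pow_left₀ (norm_nonneg _) (norm_sum_le _ _) 2).trans sq_sum_le_card_mul_sum_sq

/-- Jensen's inequality for the squared norms of a pair of averages. -/
lemma norm_average_sq_add_norm_average_sq_le [NormedSpace ℝ V] [NormedSpace ℝ W]
    {s : Finset ι} (hs : 0 < s.card) {a : ι → V}
    {c : ι → W} {K : ℝ} (h : ∀ i ∈ s, ‖a i‖ ^ 2 + ‖c i‖ ^ 2 ≤ K) :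
    ‖(s.card : ℝ)⁻¹ • ∑ i ∈ s, a i‖ ^ 2 + ‖(s.card : ℝ)⁻¹ • ∑ i ∈ s, c i‖ ^ 2 ≤ K := by
  have hs' : (0 : ℝ) < s.card := by exact_mod_cast hs
  have hsum := Finset.sum_le_sum h
  rw [Finset.sum_add_distrib, Finset.sum_const, nsmul_eq_mul] at hsum
  have ha := norm_sum_sq_le_card_mul s a
  have hc := norm_sum_sq_le_card_mul s c
  rw [norm_smul, norm_smul, mul_pow, mul_pow, ← mul_add, norm_inv, Real.norm_of_nonneg hs'.le,
    inv_pow, inv_mul_le_iff₀ (by positivity)]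
  nlinarith [mul_le_mul_of_nonneg_left hsum hs'.le]

lemma norm_add_add_sq_le (a b c : V) :
    ‖a + b + c‖ ^ 2 ≤ 3 * (‖a‖ ^ 2 + ‖b‖ ^ 2 + ‖c‖ ^ 2) := by
  have h := pow_le_pow_left₀ (norm_nonneg _) (norm_add₃_le (a := a) (b := b) (c := c)) 2
  nlinarith [sq_nonneg (‖a‖ - ‖b‖), sq_nonneg (‖b‖ - ‖c‖), sq_nonneg (‖a‖ - ‖c‖)]

/-- Variance of sampling without replacement: second moment of the partial sums of a uniformly
random permutation of a family with zero sum. -/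
lemma sum_perm_norm_sum_sq [InnerProductSpace ℝ V] [Fintype ι] [DecidableEq ι]
    (a : ι → V) (ha : ∑ i, a i = 0) (T : Finset ι) :
    (Fintype.card ι : ℝ) * ((Fintype.card ι : ℝ) - 1) *
        ∑ σ : Equiv.Perm ι, ‖∑ j ∈ T, a (σ j)‖ ^ 2 =
      (T.card : ℝ) * ((Fintype.card ι : ℝ) - T.card) *
        ((Fintype.card (Equiv.Perm ι) : ℝ) * ∑ i, ‖a i‖ ^ 2) := by
  rcases isEmpty_or_nonempty ι with hι | ⟨⟨i₀⟩⟩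
  · simp [Finset.eq_empty_of_isEmpty T]
  set c : ι → ι → ℝ := fun i j => ∑ σ : Equiv.Perm ι, inner ℝ (a (σ i)) (a (σ j)) with hc
  have hinv : ∀ (τ : Equiv.Perm ι) (i j : ι), c (τ i) (τ j) = c i j := fun τ i j =>
    Equiv.sum_comp (Equiv.mulRight τ) fun σ : Equiv.Perm ι => inner ℝ (a (σ i)) (a (σ j))
  have hdiag : ∀ i, c i i = c i₀ i₀ := fun i => by
    simpa using (hinv (Equiv.swap i₀ i) i₀ i₀)
  have hrow : ∀ i, ∑ j, c i j = 0 := fun i => by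
    rw [hc, Finset.sum_comm]
    refine Finset.sum_eq_zero fun σ _ => ?_
    rw [← inner_sum, Equiv.sum_comp σ a, ha, inner_zero_right]
  have hoff : ∀ i j, i ≠ j → ((Fintype.card ι : ℝ) - 1) * c i j = -c i₀ i₀ := by
    intro i j hij
    have hconst : ∀ k ∈ Finset.univ.erase i, c i k = c i j := fun k hk => by
      have hki : i ≠ k := (Finset.ne_of_mem_erase hk).symm
      simpa [Equiv.swap_apply_of_ne_of_ne hij hki] using hinv (Equiv.swap j k) i j
    have hr := hrow i
    rw [← Finset.add_sum_erase _ _ (Finset.mem_univ i), Finset.sum_congr rfl hconst,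
      Finset.sum_const, nsmul_eq_mul, Finset.cast_card_erase_of_mem (Finset.mem_univ i),
      hdiag, Finset.card_univ] at hr
    linarith
  have htrace : (Fintype.card ι : ℝ) * c i₀ i₀ =
      (Fintype.card (Equiv.Perm ι) : ℝ) * ∑ i, ‖a i‖ ^ 2 := by
    have h1 : ∑ i, c i i = (Fintype.card ι : ℝ) * c i₀ i₀ := by
      rw [Finset.sum_congr rfl fun i _ => hdiag i]; simp
    rw [← h1, hc, Finset.sum_comm]
    simp only [real_inner_self_eq_norm_sq]
    rw [Finset.sum_congr rfl fun σ _ => Equiv.sum_comp σ fun i => ‖a i‖ ^ 2]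
    simp
  have hentry : ∀ i j, ((Fintype.card ι : ℝ) - 1) * c i j =
      (if i = j then (Fintype.card ι : ℝ) * c i₀ i₀ else 0) - c i₀ i₀ := by
    intro i j
    split_ifs with h
    · rw [← h, hdiag]; ring
    · rw [hoff i j h]; ring
  have hexp : ∑ σ : Equiv.Perm ι, ‖∑ j ∈ T, a (σ j)‖ ^ 2 = ∑ i ∈ T, ∑ j ∈ T, c i j := by
    simp only [← real_inner_self_eq_norm_sq, sum_inner, inner_sum, hc]
    rw [Finset.sum_comm]
    refine Finset.sum_congr rfl fun i _ => ?_
    rw [Finset.sum_comm]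
    simp only [real_inner_comm]
  have hsum : ((Fintype.card ι : ℝ) - 1) * ∑ i ∈ T, ∑ j ∈ T, c i j =
      (T.card : ℝ) * ((Fintype.card ι : ℝ) - T.card) * c i₀ i₀ := by
    simp only [Finset.mul_sum, hentry, Finset.sum_sub_distrib, Finset.sum_ite_eq,
      Finset.sum_const, nsmul_eq_mul]
    rw [Finset.sum_ite_mem, Finset.inter_self, Finset.sum_const, nsmul_eq_mul]
    ring
  rw [hexp, mul_assoc, hsum, ← htrace]
  ring

end Averages

section Sums

lemma sum_range_cast_real (q : ℕ) : ∑ t ∈ Finset.range q, (t : ℝ) = q * (q - 1) / 2 := by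
  induction q with
  | zero => simp
  | succ q ih => rw [Finset.sum_range_succ, ih]; push_cast; ring

lemma sum_range_cast_sq_real (q : ℕ) :
    ∑ t ∈ Finset.range q, (t : ℝ) ^ 2 = q * (q - 1) * (2 * q - 1) / 6 := by
  induction q with
  | zero => simp
  | succ q ih => rw [Finset.sum_range_succ, ih]; push_cast; ring

/-- A discrete Grönwall-type bound: small feedback at most doubles the total forcing. -/
lemma sum_range_le_two_mul_of_feedback {q : ℕ} {D R : ℕ → ℝ} {c : ℝ} (hc : 0 ≤ c)
    (hD : ∀ t, 0 ≤ D t) (hcq : c * (q * (q - 1)) ≤ 1)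
    (h : ∀ t < q, D t ≤ c * t * ∑ s ∈ Finset.range t, D s + R t) :
    ∑ t ∈ Finset.range q, D t ≤ 2 * ∑ t ∈ Finset.range q, R t := by
  set S := ∑ t ∈ Finset.range q, D t with hS
  have hS0 : 0 ≤ S := Finset.sum_nonneg fun t _ => hD t
  have hstep : ∀ t ∈ Finset.range q, D t ≤ c * S * t + R t := by
    intro t ht
    have hsub : ∑ s ∈ Finset.range t, D s ≤ S :=
      Finset.sum_le_sum_of_subset_of_nonneg
        (Finset.range_mono (Finset.mem_range.1 ht).le) fun s _ _ => hD s
    have := mul_le_mul_of_nonneg_left hsub (by positivity : 0 ≤ c * t)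
    linarith [h t (Finset.mem_range.1 ht)]
  have hsum := Finset.sum_le_sum hstep
  rw [Finset.sum_add_distrib, ← Finset.mul_sum, sum_range_cast_real, ← hS] at hsum
  nlinarith [mul_le_mul_of_nonneg_right hcq hS0]

end Sums

section Epoch

variable {n : ℕ} {E F V : Type*}

lemma simEpoch_eq_sum [AddCommGroup E] [Module ℝ E] [AddCommGroup F] [Module ℝ F]
    (α β : ℝ) (b : ℕ) (g1 : Fin n → E → F → E) (g2 : Fin n → E → F → F)
    (σ : Equiv.Perm (Fin n)) (z : E × F) (t : ℕ) :
    (simEpoch α β b g1 g2 σ t z).1 = z.1 - α • ∑ s ∈ Finset.range t,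
        batchAvg b g1 σ s (simEpoch α β b g1 g2 σ s z).1 (simEpoch α β b g1 g2 σ s z).2 ∧
      (simEpoch α β b g1 g2 σ t z).2 = z.2 + β • ∑ s ∈ Finset.range t,
        batchAvg b g2 σ s (simEpoch α β b g1 g2 σ s z).1 (simEpoch α β b g1 g2 σ s z).2 := by
  induction t with
  | zero => simp [simEpoch]
  | succ t ih =>
    rw [Finset.sum_range_succ, Finset.sum_range_succ]
    constructor
    · rw [smul_add, ← sub_sub, ← ih.1]; rfl
    · rw [smul_add, ← add_assoc, ← ih.2]; rfl

lemma sum_range_batchAvg [AddCommGroup V] [Module ℝ V] (b : ℕ) (g : Fin n → E → F → V)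
    (σ : Equiv.Perm (Fin n)) (x : E) (y : F) (t : ℕ) :
    ∑ s ∈ Finset.range t, batchAvg b g σ s x y =
      (b : ℝ)⁻¹ • ∑ j ∈ Finset.univ.filter (fun j : Fin n => (j : ℕ) < b * t), g (σ j) x y := by
  induction t with
  | zero => simp
  | succ t ih =>
    rw [Finset.sum_range_succ, ih, batchAvg, ← smul_add, ← Finset.sum_union]
    · congr 2
      ext j
      simp only [Finset.mem_union, Finset.mem_filter, Finset.mem_univ, true_and]
      have : b * t ≤ b * (t + 1) := by gcongr; omega
      omega
    · rw [Finset.disjoint_filter]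
      intro j _ h1 h2
      omega

lemma card_batch {b q t : ℕ} (hq : n = b * q) (ht : t < q) :
    (Finset.univ.filter (fun j : Fin n => b * t ≤ (j : ℕ) ∧ (j : ℕ) < b * (t + 1))).card = b := by
  have h1 : b * (t + 1) ≤ n := by rw [hq]; gcongr; omega
  have hset : Finset.univ.filter (fun j : Fin n => b * t ≤ (j : ℕ) ∧ (j : ℕ) < b * (t + 1)) =
      (Finset.univ.filter fun j : Fin n => (j : ℕ) < b * (t + 1)) \
        Finset.univ.filter fun j : Fin n => (j : ℕ) < b * t := by
    ext j
    simp only [Finset.mem_sdiff, Finset.mem_filter, Finset.mem_univ, true_and]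
    omega
  have h2 : b * (t + 1) = b * t + b := by ring
  rw [hset, Finset.card_sdiff_of_subset, Fin.card_filter_val_lt, Fin.card_filter_val_lt]
  · omega
  · intro j
    simp only [Finset.mem_filter, Finset.mem_univ, true_and]
    omega

/-- Mini-batch gradients inherit joint Lipschitz continuity. -/
lemma batchAvg_lipschitz [NormedAddCommGroup E] [NormedSpace ℝ E] [NormedAddCommGroup F]
    [NormedSpace ℝ F] {b q t : ℕ} (hb : 0 < b) (hq : n = b * q) (ht : t < q) {K : ℝ}
    {g1 : Fin n → E → F → E} {g2 : Fin n → E → F → F} {x x' : E} {y y' : F}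
    (hg : ∀ i, ‖g1 i x y - g1 i x' y'‖ ^ 2 + ‖g2 i x y - g2 i x' y'‖ ^ 2 ≤ K)
    (σ : Equiv.Perm (Fin n)) :
    ‖batchAvg b g1 σ t x y - batchAvg b g1 σ t x' y'‖ ^ 2 +
      ‖batchAvg b g2 σ t x y - batchAvg b g2 σ t x' y'‖ ^ 2 ≤ K := by
  have hcard := card_batch hq ht
  have h := norm_average_sq_add_norm_average_sq_le (hcard.symm ▸ hb) fun j
    (_ : j ∈ Finset.univ.filter
      (fun j : Fin n => b * t ≤ (j : ℕ) ∧ (j : ℕ) < b * (t + 1))) => hg (σ j)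
  rw [hcard] at h
  simpa only [batchAvg, ← smul_sub, ← Finset.sum_sub_distrib] using h

/-- Mean squared deviation of the accumulated mini-batch gradients at a fixed point from their
expected value. -/
lemma sum_perm_norm_sum_batchAvg_sub_sq [NormedAddCommGroup V] [InnerProductSpace ℝ V]
    {b q t : ℕ} (hn : 2 ≤ n) (hb : 0 < b) (hq : n = b * q)
    (ht : t ≤ q) (g : Fin n → E → F → V) (x : E) (y : F) (G : V)
    (hG : G = (n : ℝ)⁻¹ • ∑ i, g i x y) :
    ∑ σ : Equiv.Perm (Fin n), ‖∑ s ∈ Finset.range t, batchAvg b g σ s x y - (t : ℝ) • G‖ ^ 2 =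
      (Fintype.card (Equiv.Perm (Fin n)) : ℝ) *
        ((t : ℝ) * (q - t) / (n - 1) * ((∑ i, ‖g i x y - G‖ ^ 2) / n)) := by
  have hn0 : (n : ℝ) ≠ 0 := by positivity
  have hn1 : (n : ℝ) - 1 ≠ 0 := by
    have : (2 : ℝ) ≤ n := by exact_mod_cast hn
    linarith
  have hb0 : (b : ℝ) ≠ 0 := by positivity
  have hbt : b * t ≤ n := by rw [hq]; gcongr
  have hcard : (Finset.univ.filter fun j : Fin n => (j : ℕ) < b * t).card = b * t := by
    rw [Fin.card_filter_val_lt]; omega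
  have hzero : ∑ i, (g i x y - G) = 0 := by
    rw [Finset.sum_sub_distrib, Finset.sum_const, Finset.card_univ, Fintype.card_fin, hG,
      ← Nat.cast_smul_eq_nsmul ℝ, smul_inv_smul₀ hn0, sub_self]
  have hvar := sum_perm_norm_sum_sq (fun i => g i x y - G) hzero
    (Finset.univ.filter fun j : Fin n => (j : ℕ) < b * t)
  rw [hcard, Fintype.card_fin] at hvar
  have hterm : ∀ σ : Equiv.Perm (Fin n),
      ‖∑ s ∈ Finset.range t, batchAvg b g σ s x y - (t : ℝ) • G‖ ^ 2 =
        ((b : ℝ) ^ 2)⁻¹ * ‖∑ j ∈ Finset.univ.filter (fun j : Fin n => (j : ℕ) < b * t),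
          (g (σ j) x y - G)‖ ^ 2 := by
    intro σ
    have e : ∑ s ∈ Finset.range t, batchAvg b g σ s x y - (t : ℝ) • G =
        (b : ℝ)⁻¹ • ∑ j ∈ Finset.univ.filter (fun j : Fin n => (j : ℕ) < b * t),
          (g (σ j) x y - G) := by
      rw [sum_range_batchAvg, Finset.sum_sub_distrib, Finset.sum_const, hcard, smul_sub,
        ← Nat.cast_smul_eq_nsmul ℝ, Nat.cast_mul, smul_smul, inv_mul_cancel_left₀ hb0]
    rw [e, norm_smul, mul_pow, norm_inv, inv_pow, Real.norm_natCast]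
  rw [Finset.sum_congr rfl fun σ _ => hterm σ, ← Finset.mul_sum]
  have hnq : (n : ℝ) = b * q := by rw [hq]; push_cast; ring
  push_cast at hvar
  have hmain : ∑ σ : Equiv.Perm (Fin n),
      ‖∑ j ∈ Finset.univ.filter (fun j : Fin n => (j : ℕ) < b * t), (g (σ j) x y - G)‖ ^ 2 =
        (b : ℝ) ^ 2 * (t * (q - t)) * ((Fintype.card (Equiv.Perm (Fin n)) : ℝ) *
          ∑ i, ‖g i x y - G‖ ^ 2) / (n * (n - 1)) := by
    rw [eq_div_iff (mul_ne_zero hn0 hn1), mul_comm, hvar]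
    have : (n : ℝ) - b * t = b * (q - t) := by rw [hnq]; ring
    rw [this]
    ring
  rw [hmain]
  field_simp

end Epoch

lemma HasGradientAt.sum_div {ι E : Type*} [NormedAddCommGroup E] [InnerProductSpace ℝ E]
    [CompleteSpace E] {s : Finset ι} {f : ι → E → ℝ} {g : ι → E} {x : E} (c : ℝ)
    (h : ∀ i ∈ s, HasGradientAt (f i) (g i) x) :
    HasGradientAt (fun x' => (∑ i ∈ s, f i x') / c) (c⁻¹ • ∑ i ∈ s, g i) x := by
  rw [hasGradientAt_iff_hasFDerivAt]
  have := (HasFDerivAt.fun_sum fun i hi => (h i hi).hasFDerivAt).const_mul c⁻¹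
  simpa [div_eq_inv_mul] using this

section Drift

variable {n : ℕ} {E F : Type*} [NormedAddCommGroup E] [InnerProductSpace ℝ E]
  [NormedAddCommGroup F] [InnerProductSpace ℝ F]

/-- Total squared distance of the first `q` iterates of an epoch from its starting point. -/
noncomputable def epochDrift (α β : ℝ) (b q : ℕ) (g1 : Fin n → E → F → E)
    (g2 : Fin n → E → F → F) (σ : Equiv.Perm (Fin n)) (z : E × F) : ℝ :=
  ∑ t ∈ Finset.range q, (‖(simEpoch α β b g1 g2 σ t z).1 - z.1‖ ^ 2 +
    ‖(simEpoch α β b g1 g2 σ t z).2 - z.2‖ ^ 2)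

/-- The epoch average of the mini-batch gradients estimates the full gradient up to the drift. -/
lemma norm_epoch_average_sub_sq_le {α β L : ℝ} {b q : ℕ} (hb : 0 < b) (hq0 : 0 < q)
    (hq : n = b * q) {g1 : Fin n → E → F → E} {g2 : Fin n → E → F → F}
    (hsmooth : ∀ i x y x' y', ‖g1 i x y - g1 i x' y'‖ ^ 2 + ‖g2 i x y - g2 i x' y'‖ ^ 2
        ≤ L ^ 2 * (‖x - x'‖ ^ 2 + ‖y - y'‖ ^ 2))
    (σ : Equiv.Perm (Fin n)) (z : E × F) {v : E} {w : F}
    (hv : v = (n : ℝ)⁻¹ • ∑ i, g1 i z.1 z.2) (hw : w = (n : ℝ)⁻¹ • ∑ i, g2 i z.1 z.2) :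
    ‖(q : ℝ)⁻¹ • ∑ s ∈ Finset.range q, batchAvg b g1 σ s (simEpoch α β b g1 g2 σ s z).1
        (simEpoch α β b g1 g2 σ s z).2 - v‖ ^ 2 +
      ‖(q : ℝ)⁻¹ • ∑ s ∈ Finset.range q, batchAvg b g2 σ s (simEpoch α β b g1 g2 σ s z).1
        (simEpoch α β b g1 g2 σ s z).2 - w‖ ^ 2 ≤
      L ^ 2 / q * epochDrift α β b q g1 g2 σ z := by
  have hq' : (0 : ℝ) < q := by exact_mod_cast hq0
  have hfull : (Finset.univ.filter fun j : Fin n => (j : ℕ) < b * q) = Finset.univ :=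
    Finset.filter_true_of_mem fun j _ => hq ▸ j.2
  have hnq : (n : ℝ)⁻¹ = (q : ℝ)⁻¹ * (b : ℝ)⁻¹ := by rw [hq]; push_cast; rw [mul_inv, mul_comm]
  have hv' : v = (q : ℝ)⁻¹ • ∑ s ∈ Finset.range q, batchAvg b g1 σ s z.1 z.2 := by
    rw [sum_range_batchAvg, hfull, Equiv.sum_comp σ fun i => g1 i z.1 z.2, smul_smul, ← hnq, hv]
  have hw' : w = (q : ℝ)⁻¹ • ∑ s ∈ Finset.range q, batchAvg b g2 σ s z.1 z.2 := by
    rw [sum_range_batchAvg, hfull, Equiv.sum_comp σ fun i => g2 i z.1 z.2, smul_smul, ← hnq, hw]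
  rw [hv', hw', ← smul_sub, ← smul_sub, ← Finset.sum_sub_distrib, ← Finset.sum_sub_distrib,
    norm_smul, norm_smul, mul_pow, mul_pow, ← mul_add, norm_inv, Real.norm_natCast]
  have h1 := norm_sum_sq_le_card_mul (Finset.range q) fun s =>
    batchAvg b g1 σ s (simEpoch α β b g1 g2 σ s z).1 (simEpoch α β b g1 g2 σ s z).2 -
      batchAvg b g1 σ s z.1 z.2
  have h2 := norm_sum_sq_le_card_mul (Finset.range q) fun s =>
    batchAvg b g2 σ s (simEpoch α β b g1 g2 σ s z).1 (simEpoch α β b g1 g2 σ s z).2 -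
      batchAvg b g2 σ s z.1 z.2
  have h3 := Finset.sum_le_sum fun s (hs : s ∈ Finset.range q) =>
    batchAvg_lipschitz hb hq (Finset.mem_range.1 hs)
      (fun i => hsmooth i (simEpoch α β b g1 g2 σ s z).1 (simEpoch α β b g1 g2 σ s z).2 z.1 z.2) σ
  rw [Finset.sum_add_distrib, ← Finset.mul_sum] at h3
  rw [Finset.card_range] at h1 h2
  change _ ≤ L ^ 2 * epochDrift α β b q g1 g2 σ z at h3
  calc _ ≤ (q : ℝ)⁻¹ ^ 2 * (q * (L ^ 2 * epochDrift α β b q g1 g2 σ z)) := by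
        refine mul_le_mul_of_nonneg_left ?_ (by positivity)
        refine (add_le_add h1 h2).trans ?_
        rw [← mul_add]
        exact mul_le_mul_of_nonneg_left h3 hq'.le
    _ = _ := by field_simp

/-- Drift of an epoch in terms of the deviations of the mini-batch gradients at its start. -/
lemma epochDrift_le {α β L : ℝ} {b q : ℕ} (hb : 0 < b) (hq : n = b * q)
    {g1 : Fin n → E → F → E} {g2 : Fin n → E → F → F}
    (hsmooth : ∀ i x y x' y', ‖g1 i x y - g1 i x' y'‖ ^ 2 + ‖g2 i x y - g2 i x' y'‖ ^ 2
        ≤ L ^ 2 * (‖x - x'‖ ^ 2 + ‖y - y'‖ ^ 2))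
    (hstep : 3 * (α ^ 2 + β ^ 2) * L ^ 2 * (q * (q - 1)) ≤ 1)
    (σ : Equiv.Perm (Fin n)) (z : E × F) (v : E) (w : F) :
    epochDrift α β b q g1 g2 σ z ≤ 2 * ∑ t ∈ Finset.range q,
      3 * (α ^ 2 * ‖∑ s ∈ Finset.range t, batchAvg b g1 σ s z.1 z.2 - (t : ℝ) • v‖ ^ 2 +
        β ^ 2 * ‖∑ s ∈ Finset.range t, batchAvg b g2 σ s z.1 z.2 - (t : ℝ) • w‖ ^ 2 +
        (t : ℝ) ^ 2 * (α ^ 2 * ‖v‖ ^ 2 + β ^ 2 * ‖w‖ ^ 2)) := by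
  refine sum_range_le_two_mul_of_feedback (c := 3 * (α ^ 2 + β ^ 2) * L ^ 2) (by positivity)
    (fun t => by positivity) hstep fun t ht => ?_
  set Z := fun s => simEpoch α β b g1 g2 σ s z with hZ
  set e1 := ∑ s ∈ Finset.range t, (batchAvg b g1 σ s (Z s).1 (Z s).2 - batchAvg b g1 σ s z.1 z.2)
    with he1
  set e2 := ∑ s ∈ Finset.range t, (batchAvg b g2 σ s (Z s).1 (Z s).2 - batchAvg b g2 σ s z.1 z.2)
    with he2
  set N1 := ∑ s ∈ Finset.range t, batchAvg b g1 σ s z.1 z.2 - (t : ℝ) • v with hN1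
  set N2 := ∑ s ∈ Finset.range t, batchAvg b g2 σ s z.1 z.2 - (t : ℝ) • w with hN2
  obtain ⟨hx, hy⟩ := simEpoch_eq_sum α β b g1 g2 σ z t
  have hx' : (Z t).1 - z.1 = -(α • (e1 + N1 + (t : ℝ) • v)) := by
    rw [hZ]; dsimp only; rw [hx, he1, hN1, Finset.sum_sub_distrib]
    simp [hZ]
  have hy' : (Z t).2 - z.2 = β • (e2 + N2 + (t : ℝ) • w) := by
    rw [hZ]; dsimp only; rw [hy, he2, hN2, Finset.sum_sub_distrib]
    simp [hZ]
  have hen : ‖e1‖ ^ 2 + ‖e2‖ ^ 2 ≤ t * (L ^ 2 * ∑ s ∈ Finset.range t,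
      (‖(Z s).1 - z.1‖ ^ 2 + ‖(Z s).2 - z.2‖ ^ 2)) := by
    have h1 := norm_sum_sq_le_card_mul (Finset.range t) fun s =>
      batchAvg b g1 σ s (Z s).1 (Z s).2 - batchAvg b g1 σ s z.1 z.2
    have h2 := norm_sum_sq_le_card_mul (Finset.range t) fun s =>
      batchAvg b g2 σ s (Z s).1 (Z s).2 - batchAvg b g2 σ s z.1 z.2
    have h3 := Finset.sum_le_sum fun s (hs : s ∈ Finset.range t) =>
      batchAvg_lipschitz hb hq ((Finset.mem_range.1 hs).trans ht)
        (fun i => hsmooth i (Z s).1 (Z s).2 z.1 z.2) σ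
    rw [Finset.sum_add_distrib, ← Finset.mul_sum] at h3
    rw [Finset.card_range] at h1 h2
    refine (add_le_add h1 h2).trans ?_
    rw [← mul_add]
    exact mul_le_mul_of_nonneg_left h3 (by positivity)
  change ‖(Z t).1 - z.1‖ ^ 2 + ‖(Z t).2 - z.2‖ ^ 2 ≤ 3 * (α ^ 2 + β ^ 2) * L ^ 2 * t *
    ∑ s ∈ Finset.range t, (‖(Z s).1 - z.1‖ ^ 2 + ‖(Z s).2 - z.2‖ ^ 2) + _
  generalize ∑ s ∈ Finset.range t, (‖(Z s).1 - z.1‖ ^ 2 + ‖(Z s).2 - z.2‖ ^ 2) = S at *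
  rw [hx', hy', norm_neg, norm_smul, norm_smul, mul_pow, mul_pow, Real.norm_eq_abs, sq_abs,
    Real.norm_eq_abs, sq_abs]
  have b1 := mul_le_mul_of_nonneg_left (norm_add_add_sq_le e1 N1 ((t : ℝ) • v)) (sq_nonneg α)
  have b2 := mul_le_mul_of_nonneg_left (norm_add_add_sq_le e2 N2 ((t : ℝ) • w)) (sq_nonneg β)
  rw [norm_smul, mul_pow, Real.norm_natCast] at b1 b2
  have b3 : α ^ 2 * ‖e1‖ ^ 2 + β ^ 2 * ‖e2‖ ^ 2 ≤ (α ^ 2 + β ^ 2) * (‖e1‖ ^ 2 + ‖e2‖ ^ 2) := by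
    have : 0 ≤ α ^ 2 * ‖e2‖ ^ 2 + β ^ 2 * ‖e1‖ ^ 2 := by positivity
    linarith
  have b4 := mul_le_mul_of_nonneg_left hen (by positivity : 0 ≤ α ^ 2 + β ^ 2)
  linarith

/-- Expected drift of an epoch under random reshuffling. -/
lemma sum_perm_epochDrift_le {α β L A B : ℝ} {b q : ℕ} (hn : 2 ≤ n) (hb : 0 < b)
    (hq : n = b * q) {g1 : Fin n → E → F → E} {g2 : Fin n → E → F → F}
    (hsmooth : ∀ i x y x' y', ‖g1 i x y - g1 i x' y'‖ ^ 2 + ‖g2 i x y - g2 i x' y'‖ ^ 2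
        ≤ L ^ 2 * (‖x - x'‖ ^ 2 + ‖y - y'‖ ^ 2))
    (hstep : 3 * (α ^ 2 + β ^ 2) * L ^ 2 * (q * (q - 1)) ≤ 1) (hA : 0 ≤ A) (hB : 0 ≤ B)
    (z : E × F) {v : E} {w : F}
    (hv : v = (n : ℝ)⁻¹ • ∑ i, g1 i z.1 z.2) (hw : w = (n : ℝ)⁻¹ • ∑ i, g2 i z.1 z.2)
    (hvar1 : (∑ i, ‖g1 i z.1 z.2 - v‖ ^ 2) / n ≤ A * ‖v‖ ^ 2 + B)
    (hvar2 : (∑ i, ‖g2 i z.1 z.2 - w‖ ^ 2) / n ≤ A * ‖w‖ ^ 2 + B) :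
    ∑ σ : Equiv.Perm (Fin n), epochDrift α β b q g1 g2 σ z ≤
      (Fintype.card (Equiv.Perm (Fin n)) : ℝ) *
        (2 * q * ((q : ℝ) ^ 2 + (q * (q - 1) / (n - 1)) * A) *
          (α ^ 2 * ‖v‖ ^ 2 + β ^ 2 * ‖w‖ ^ 2) +
        2 * ((q : ℝ) ^ 2 * (q - 1) / (n - 1)) * (α ^ 2 + β ^ 2) * B) := by
  have hn1 : (0 : ℝ) < (n : ℝ) - 1 := by
    have : (2 : ℝ) ≤ n := by exact_mod_cast hn
    linarith
  have hq1 : (1 : ℝ) ≤ q := by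
    have : 0 < q := Nat.pos_of_ne_zero fun h => by simp [h] at hq; omega
    exact_mod_cast this
  set P := (Fintype.card (Equiv.Perm (Fin n)) : ℝ) with hP
  have hP0 : 0 ≤ P := by positivity
  set H := α ^ 2 * ‖v‖ ^ 2 + β ^ 2 * ‖w‖ ^ 2 with hH
  have hH0 : 0 ≤ H := by positivity
  set W := A * H + (α ^ 2 + β ^ 2) * B with hW
  have hW0 : 0 ≤ W := by positivity
  have hterm : ∀ t ∈ Finset.range q, ∑ σ : Equiv.Perm (Fin n),
      3 * (α ^ 2 * ‖∑ s ∈ Finset.range t, batchAvg b g1 σ s z.1 z.2 - (t : ℝ) • v‖ ^ 2 +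
        β ^ 2 * ‖∑ s ∈ Finset.range t, batchAvg b g2 σ s z.1 z.2 - (t : ℝ) • w‖ ^ 2 +
        (t : ℝ) ^ 2 * H) ≤ P * (3 * (W / (n - 1) * (q * t - t ^ 2) + H * t ^ 2)) := by
    intro t ht
    have htq : t ≤ q := (Finset.mem_range.1 ht).le
    have htq' : (t : ℝ) ≤ q := by exact_mod_cast htq
    rw [← Finset.mul_sum, Finset.sum_add_distrib, Finset.sum_add_distrib, ← Finset.mul_sum,
      ← Finset.mul_sum, sum_perm_norm_sum_batchAvg_sub_sq hn hb hq htq g1 z.1 z.2 v hv,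
      sum_perm_norm_sum_batchAvg_sub_sq hn hb hq htq g2 z.1 z.2 w hw, Finset.sum_const,
      nsmul_eq_mul, Finset.card_univ, ← hP]
    have hk : 0 ≤ (t : ℝ) * (q - t) / (n - 1) :=
      div_nonneg (mul_nonneg (by positivity) (by linarith)) hn1.le
    have hcomb : α ^ 2 * ((∑ i, ‖g1 i z.1 z.2 - v‖ ^ 2) / n) +
        β ^ 2 * ((∑ i, ‖g2 i z.1 z.2 - w‖ ^ 2) / n) ≤ W := by
      have h1 := mul_le_mul_of_nonneg_left hvar1 (sq_nonneg α)
      have h2 := mul_le_mul_of_nonneg_left hvar2 (sq_nonneg β)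
      rw [hW, hH]
      linarith
    have hPk := mul_le_mul_of_nonneg_left hcomb (mul_nonneg hP0 hk)
    have e : W / ((n : ℝ) - 1) * (q * t - t ^ 2) = (t : ℝ) * (q - t) / (n - 1) * W := by ring
    rw [e]
    linarith
  calc ∑ σ : Equiv.Perm (Fin n), epochDrift α β b q g1 g2 σ z
      ≤ 2 * ∑ t ∈ Finset.range q, P * (3 * (W / (n - 1) * (q * t - t ^ 2) + H * t ^ 2)) := by
        refine (Finset.sum_le_sum fun σ _ => epochDrift_le hb hq hsmooth hstep σ z v w).trans ?_
        rw [← Finset.mul_sum, Finset.sum_comm]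
        exact mul_le_mul_of_nonneg_left (Finset.sum_le_sum hterm) zero_le_two
    _ = P * (W / (n - 1) * (q * (q - 1) * (q + 1)) + H * (q * (q - 1) * (2 * q - 1))) := by
        simp only [← Finset.mul_sum, Finset.sum_add_distrib, Finset.sum_sub_distrib,
          sum_range_cast_real, sum_range_cast_sq_real]
        ring
    _ ≤ P * (W / (n - 1) * (q * (q - 1) * (2 * q)) + H * (2 * q * q ^ 2)) := by
        have hqq : 0 ≤ (q : ℝ) * (q - 1) := mul_nonneg (by positivity) (by linarith)
        refine mul_le_mul_of_nonneg_left (add_le_add ?_ ?_) hP0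
        · exact mul_le_mul_of_nonneg_left (mul_le_mul_of_nonneg_left (by linarith) hqq)
            (div_nonneg hW0 hn1.le)
        · refine mul_le_mul_of_nonneg_left ?_ hH0
          nlinarith
    _ = _ := by rw [hW]; field_simp; ring

end Drift

/-- **Lemma (per-epoch recurrence with small step sizes, simSGDA-RR).**
Under Assumptions 1–4, if the step sizes satisfy
`α ≤ λ/(((λ+1)(κ₂+1)+1)qL)`, `β ≤ 1/(qL)`, `α² + β² ≤ 1/(3q(q−1)L²)` and `C₀ ≥ 0`, then
`E_k[V_λ(z₀^{k+1})] − V_λ(z₀^k) ≤ −C₁‖∇Φ(x₀^k)‖² − C₂(Φ(x₀^k) − f(z₀^k)) + C₃`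
with the explicit constants `C₀, C₁, C₂, C₃`. -/
theorem sim_epoch_recurrence_small_steps
    (dx dy n b q : ℕ) (hn : 2 ≤ n) (hb : 0 < b) (hq : n = b * q)
    (L μ2 A B lam : ℝ) (hL : 0 < L) (hμ2 : 0 < μ2) (hA : 0 ≤ A) (hB : 0 ≤ B) (hlam : 0 < lam)
    (f : Fin n → EuclideanSpace ℝ (Fin dx) → EuclideanSpace ℝ (Fin dy) → ℝ)
    (g1 : Fin n → EuclideanSpace ℝ (Fin dx) → EuclideanSpace ℝ (Fin dy) → EuclideanSpace ℝ (Fin dx))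
    (g2 : Fin n → EuclideanSpace ℝ (Fin dx) → EuclideanSpace ℝ (Fin dy) → EuclideanSpace ℝ (Fin dy))
    (Fm : EuclideanSpace ℝ (Fin dx) → EuclideanSpace ℝ (Fin dy) → ℝ)
    (G1 : EuclideanSpace ℝ (Fin dx) → EuclideanSpace ℝ (Fin dy) → EuclideanSpace ℝ (Fin dx))
    (G2 : EuclideanSpace ℝ (Fin dx) → EuclideanSpace ℝ (Fin dy) → EuclideanSpace ℝ (Fin dy))
    (hFm : ∀ x y, Fm x y = (∑ i, f i x y) / n)
    (hG1 : ∀ x y, G1 x y = (n : ℝ)⁻¹ • ∑ i, g1 i x y)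
    (hG2 : ∀ x y, G2 x y = (n : ℝ)⁻¹ • ∑ i, g2 i x y)
    (hg1 : ∀ i x y, HasGradientAt (fun x' => f i x' y) (g1 i x y) x)
    (hg2 : ∀ i x y, HasGradientAt (fun y' => f i x y') (g2 i x y) y)
    (hsmooth : ∀ i x y x' y',
      ‖g1 i x y - g1 i x' y'‖ ^ 2 + ‖g2 i x y - g2 i x' y'‖ ^ 2
        ≤ L ^ 2 * (‖x - x'‖ ^ 2 + ‖y - y'‖ ^ 2))
    (hvar1 : ∀ x y, (∑ i, ‖g1 i x y - G1 x y‖ ^ 2) / n ≤ A * ‖G1 x y‖ ^ 2 + B)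
    (hvar2 : ∀ x y, (∑ i, ‖g2 i x y - G2 x y‖ ^ 2) / n ≤ A * ‖G2 x y‖ ^ 2 + B)
    (Φ : EuclideanSpace ℝ (Fin dx) → ℝ) (Φs : ℝ)
    (hΦ : ∀ x, IsGreatest (Set.range (Fm x)) (Φ x))
    (hYcl : ∀ x, IsClosed {y | Fm x y = Φ x})
    (hΦs : IsGLB (Set.range Φ) Φs)
    (hPL2 : ∀ x y, 2 * μ2 * (Φ x - Fm x y) ≤ ‖G2 x y‖ ^ 2)
    (V : EuclideanSpace ℝ (Fin dx) → EuclideanSpace ℝ (Fin dy) → ℝ)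
    (hV : ∀ x y, V x y = lam * (Φ x - Φs) + (Φ x - Fm x y))
    (α β : ℝ) (hα : 0 < α) (hβ : 0 < β)
    (hαsmall : α ≤ lam / (((lam + 1) * (L / μ2 + 1) + 1) * (q : ℝ) * L))
    (hβsmall : β ≤ 1 / ((q : ℝ) * L))
    (hαβ : α ^ 2 + β ^ 2 ≤ 1 / (3 * (q : ℝ) * ((q : ℝ) - 1) * L ^ 2))
    (C0 C1 C2 C3 : ℝ)
    (hC0 : C0 = (q : ℝ) * β - 2 * L ^ 2 * (q : ℝ) *
      ((q : ℝ) ^ 2 + ((q : ℝ) * ((q : ℝ) - 1) / ((n : ℝ) - 1)) * A) *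
      ((2 * lam + 1) * α + β) * β ^ 2)
    (hC0pos : 0 ≤ C0)
    (hC1 : C1 = ((lam - 1) / 2) * ((q : ℝ) * α) - 2 * L ^ 2 * (q : ℝ) *
      ((q : ℝ) ^ 2 + ((q : ℝ) * ((q : ℝ) - 1) / ((n : ℝ) - 1)) * A) *
      ((2 * lam + 1) * α + β) * α ^ 2)
    (hC2 : C2 = μ2 * (q : ℝ) * β - 2 * (lam + 2) * L * (L / μ2) * ((q : ℝ) * α)
      - 2 * L ^ 2 * μ2 * (q : ℝ) *
        ((q : ℝ) ^ 2 + ((q : ℝ) * ((q : ℝ) - 1) / ((n : ℝ) - 1)) * A) *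
        ((2 * lam + 1) * α + β) * (2 * (L / μ2) ^ 2 * α ^ 2 + β ^ 2))
    (hC3 : C3 = (L ^ 2 * (q : ℝ) ^ 2 * ((q : ℝ) - 1) / ((n : ℝ) - 1)) *
      ((2 * lam + 1) * α + β) * (α ^ 2 + β ^ 2) * B)
    (x0 : EuclideanSpace ℝ (Fin dx)) (y0 : EuclideanSpace ℝ (Fin dy)) :
    (∑ σ : Equiv.Perm (Fin n),
        V (simEpoch α β b g1 g2 σ q (x0, y0)).1 (simEpoch α β b g1 g2 σ q (x0, y0)).2) /
      (Fintype.card (Equiv.Perm (Fin n)) : ℝ) - V x0 y0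
      ≤ -C1 * ‖gradient Φ x0‖ ^ 2 - C2 * (Φ x0 - Fm x0 y0) + C3 := by
  have hn0 : 0 < n := by omega
  have hq0 : 0 < q := Nat.pos_of_ne_zero fun h => by simp [h] at hq; omega
  have hqpos : (0 : ℝ) < q := by exact_mod_cast hq0
  have hf1 : ∀ x y, HasGradientAt (fun x' => Fm x' y) (G1 x y) x := fun x y => by
    simp only [hFm, hG1]
    exact HasGradientAt.sum_div (n : ℝ) fun i _ => hg1 i x y
  have hf2 : ∀ x y, HasGradientAt (fun y' => Fm x y') (G2 x y) y := fun x y => by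
    simp only [hFm, hG2]
    exact HasGradientAt.sum_div (n : ℝ) fun i _ => hg2 i x y
  have hG : ∀ x y x' y', ‖G1 x y - G1 x' y'‖ ^ 2 + ‖G2 x y - G2 x' y'‖ ^ 2
      ≤ L ^ 2 * (‖x - x'‖ ^ 2 + ‖y - y'‖ ^ 2) := fun x y x' y' => by
    have h := norm_average_sq_add_norm_average_sq_le (s := (Finset.univ : Finset (Fin n)))
      (by simpa using hn0) fun i _ => hsmooth i x y x' y'
    simpa only [hG1, hG2, ← smul_sub, ← Finset.sum_sub_distrib, Finset.card_univ,
      Fintype.card_fin] using h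
  have hstep : 3 * (α ^ 2 + β ^ 2) * L ^ 2 * (q * (q - 1)) ≤ 1 := by
    have hq1 : (1 : ℝ) ≤ q := by exact_mod_cast hq0
    have hden : 0 ≤ 3 * (q : ℝ) * ((q : ℝ) - 1) * L ^ 2 :=
      mul_nonneg (mul_nonneg (by positivity) (by linarith)) (sq_nonneg L)
    have := mul_le_mul_of_nonneg_right hαβ hden
    rw [one_div_mul_eq_div] at this
    replace this := this.trans (div_self_le_one _)
    linarith
  have hα' : ((lam + 1) * (L / μ2 + 1) + 1) * L * (q * α) ≤ lam := by
    rw [le_div_iff₀ (by positivity)] at hαsmall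
    linarith
  have hβ' : L * (q * β) ≤ 1 := by
    rw [le_div_iff₀ (by positivity)] at hβsmall
    linarith
  set M := (2 * lam + 1) * α + β with hM
  have hM0 : 0 < M := by positivity
  set v := G1 x0 y0 with hv
  set w := G2 x0 y0 with hw
  set u := gradient Φ x0 with hu
  set gap := Φ x0 - Fm x0 y0 with hgap
  have hsingle : ∀ σ : Equiv.Perm (Fin n),
      V (simEpoch α β b g1 g2 σ q (x0, y0)).1 (simEpoch α β b g1 g2 σ q (x0, y0)).2 ≤
        (V x0 y0 - (lam - 1) / 2 * (q * α) * ‖u‖ ^ 2 +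
          (lam + 2) * (q * α) * (2 * L * (L / μ2) * gap) - q * β / 2 * ‖w‖ ^ 2) +
        L ^ 2 * M / 2 * epochDrift α β b q g1 g2 σ (x0, y0) := by
    intro σ
    obtain ⟨hx, hy⟩ := simEpoch_eq_sum α β b g1 g2 σ (x0, y0) q
    have herr := norm_epoch_average_sub_sq_le (α := α) (β := β) hb hq0 hq hsmooth σ (x0, y0)
      (hG1 x0 y0) (hG2 x0 y0)
    rw [← hv, ← hw] at herr
    have hcancel : ∀ (c : ℝ) {X : Type} [AddCommGroup X] [Module ℝ X] (a : X),
        c • a = (q * c) • ((q : ℝ)⁻¹ • a) := fun c X _ _ a => by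
      rw [smul_smul, mul_right_comm, mul_inv_cancel₀ hqpos.ne', one_mul]
    rw [hcancel α] at hx
    rw [hcancel β] at hy
    rw [hx, hy, hV, hV]
    generalize (q : ℝ)⁻¹ • ∑ s ∈ Finset.range q, batchAvg b g1 σ s
      (simEpoch α β b g1 g2 σ s (x0, y0)).1 (simEpoch α β b g1 g2 σ s (x0, y0)).2 = p at herr ⊢
    generalize (q : ℝ)⁻¹ • ∑ s ∈ Finset.range q, batchAvg b g2 σ s
      (simEpoch α β b g1 g2 σ s (x0, y0)).1 (simEpoch α β b g1 g2 σ s (x0, y0)).2 = r at herr ⊢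
    have hpot := potential_step_le hL hμ2 hf1 hf2 hG hΦ hPL2 hlam (by positivity : 0 ≤ q * α)
      (by positivity : 0 ≤ q * β) hα' hβ' x0 p y0 r
    rw [← hv, ← hw, ← hu, ← hgap] at hpot
    have hscaled := mul_le_mul_of_nonneg_left herr (by positivity : 0 ≤ q * M / 2)
    have e : q * M / 2 * (L ^ 2 / q * epochDrift α β b q g1 g2 σ (x0, y0)) =
        L ^ 2 * M / 2 * epochDrift α β b q g1 g2 σ (x0, y0) := by field_simp
    rw [e, hM] at hscaled
    have h1 : 0 ≤ q * β / 2 * ‖p - v‖ ^ 2 := by positivity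
    have h2 : 0 ≤ (2 * lam + 1) / 2 * (q * α) * ‖r - w‖ ^ 2 := by positivity
    rw [hM]
    linarith
  have hsum := Finset.sum_le_sum fun σ (_ : σ ∈ Finset.univ) => hsingle σ
  rw [Finset.sum_add_distrib, Finset.sum_const, nsmul_eq_mul, ← Finset.mul_sum,
    Finset.card_univ] at hsum
  have hdrift := sum_perm_epochDrift_le hn hb hq hsmooth hstep hA hB (x0, y0)
    (hG1 x0 y0) (hG2 x0 y0) (hvar1 x0 y0) (hvar2 x0 y0)
  rw [← hv, ← hw] at hdrift
  have hdrift' := mul_le_mul_of_nonneg_left hdrift (by positivity : 0 ≤ L ^ 2 * M / 2)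
  have hPpos : (0 : ℝ) < Fintype.card (Equiv.Perm (Fin n)) := by exact_mod_cast Fintype.card_pos
  set K := (q : ℝ) ^ 2 + ((q : ℝ) * ((q : ℝ) - 1) / ((n : ℝ) - 1)) * A with hK
  have hK0 : 0 ≤ K := by
    have hq1 : (1 : ℝ) ≤ q := by exact_mod_cast hq0
    have hn1 : (2 : ℝ) ≤ n := by exact_mod_cast hn
    have : 0 ≤ (q : ℝ) * ((q : ℝ) - 1) / ((n : ℝ) - 1) :=
      div_nonneg (mul_nonneg hqpos.le (by linarith)) (by linarith)
    positivity
  have hmean : (∑ σ : Equiv.Perm (Fin n),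
      V (simEpoch α β b g1 g2 σ q (x0, y0)).1 (simEpoch α β b g1 g2 σ q (x0, y0)).2) /
        (Fintype.card (Equiv.Perm (Fin n)) : ℝ) ≤
      V x0 y0 - (lam - 1) / 2 * (q * α) * ‖u‖ ^ 2 +
        (lam + 2) * (q * α) * (2 * L * (L / μ2) * gap) - q * β / 2 * ‖w‖ ^ 2 +
        L ^ 2 * M / 2 * (2 * q * K * (α ^ 2 * ‖v‖ ^ 2 + β ^ 2 * ‖w‖ ^ 2) +
          2 * ((q : ℝ) ^ 2 * (q - 1) / (n - 1)) * (α ^ 2 + β ^ 2) * B) := by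
    rw [div_le_iff₀ hPpos]
    linarith
  have hvu : ‖v‖ ^ 2 ≤ 2 * ‖u‖ ^ 2 + 4 * L * (L / μ2) * gap := by
    have h1 := norm_partial_gradient_sub_primal_gradient_sq_le hL hμ2 hf1 hf2 hG hΦ hPL2 x0 y0
    rw [← hv, ← hu, ← hgap] at h1
    have h2 : ‖v‖ ^ 2 ≤ (‖u‖ + ‖u - v‖) ^ 2 := by
      have := norm_sub_le u (u - v)
      rw [sub_sub_cancel] at this
      exact pow_le_pow_left₀ (norm_nonneg _) this 2
    linarith [sq_nonneg (‖u‖ - ‖u - v‖)]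
  have hα2 := mul_le_mul_of_nonneg_left hvu (by positivity : 0 ≤ L ^ 2 * M * q * K * α ^ 2)
  have hw2 : C0 / 2 * (2 * μ2 * gap) ≤ C0 / 2 * ‖w‖ ^ 2 :=
    mul_le_mul_of_nonneg_left (hPL2 x0 y0) (by linarith)
  have hκ : L * (L / μ2) = μ2 * (L / μ2) ^ 2 := by field_simp
  have e2 : L ^ 2 * M * q * K * α ^ 2 * (4 * L * (L / μ2) * gap) =
      4 * (L ^ 2 * M * q * K * α ^ 2) * (μ2 * (L / μ2) ^ 2) * gap := by rw [← hκ]; ring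
  rw [hC0] at hw2
  rw [hC1, hC2, hC3]
  linear_combination hmean + hα2 + hw2 + e2
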